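/- Let Σ be a first-order signature. A class 𝒦 of Σ-structures is a quasivariety if and only if 𝒦 contains a unit and is closed under isomorphisms, substructures, and reduced products. -/

import Mathlib

/-!
Common definitions: products, reduced products, basic Horn formulas,
bundled structures, diagrams, units.
-/

namespace ZFHorn

open FirstOrder Language Structure Filter Set

universe u v w u' v' w'

variable {L : FirstOrder.Language.{v, w}}

/-- The direct product structure on a dependent function type. -/
instance piStructure {ι : Type*} (M : ι → Type*) [∀ i, L.Structure (M i)] :
    L.Structure (∀ i, M i) where
  funMap f x i := funMap f fun k => x k i
  RelMap r x := ∀ i, RelMap r fun k => x k i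

/-- The reduced-product prestructure on `∀ i, M i` modulo a filter `F`:
functions act coordinatewise, and a relation holds precisely when it holds on a
set of coordinates belonging to `F`. -/
instance reducedProductPrestructure {ι : Type*} (F : Filter ι) (M : ι → Type*)
    [∀ i, L.Structure (M i)] : L.Prestructure (F.productSetoid M) :=
  { toStructure :=
      { funMap := fun {_} f x i => funMap f fun k => x k i
        RelMap := fun {_} r x => ∀ᶠ i in F, RelMap r fun k => x k i }
    fun_equiv := fun {n} f x y xy => by
      refine mem_of_superset (iInter_mem.2 xy) fun i hi => ?_
      simp only [Set.mem_iInter, Set.mem_setOf_eq] at hi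
      simp only [Set.mem_setOf_eq, hi]
    rel_equiv := fun {n} r x y xy => by
      rw [← iff_eq_eq]
      constructor
      · intro hx
        refine mem_of_superset (inter_mem hx (iInter_mem.2 xy)) ?_
        rintro i ⟨h1, h2⟩
        simp only [Set.mem_iInter, Set.mem_setOf_eq] at *
        rw [← funext h2]
        exact h1
      · intro hy
        refine mem_of_superset (inter_mem hy (iInter_mem.2 xy)) ?_
        rintro i ⟨h1, h2⟩
        simp only [Set.mem_iInter, Set.mem_setOf_eq] at *
        rw [funext h2]
        exact h1 }

/-- The reduced product `∏_F M i` of a family of structures modulo a filter,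
as a first-order structure. -/
instance reducedProductStructure {ι : Type*} (F : Filter ι) (M : ι → Type*)
    [∀ i, L.Structure (M i)] : L.Structure (F.Product M) :=
  Language.quotientStructure

instance productNonempty {ι : Type*} (F : Filter ι) (M : ι → Type*)
    [∀ i, Nonempty (M i)] : Nonempty (F.Product M) :=
  ⟨(↑(fun i => Classical.arbitrary (M i)) : F.Product M)⟩

section Horn

variable {α : Type u'}

/-- `orList φ [ψ₁, …, ψₖ]` is the disjunction `φ ∨ ψ₁ ∨ ⋯ ∨ ψₖ`. -/
def orList : L.Formula α → List (L.Formula α) → L.Formula α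
  | φ, [] => φ
  | φ, ψ :: l => φ ⊔ orList ψ l

/-- A list of formulas is a Horn list if each member is atomic or the negation of
an atomic formula, and at most one member is atomic. -/
def IsHornList (l : List (L.Formula α)) : Prop :=
  (∀ χ ∈ l, BoundedFormula.IsAtomic χ ∨
      ∃ θ : L.Formula α, BoundedFormula.IsAtomic θ ∧ χ = θ.not) ∧
    ∀ i j : Fin l.length,
      BoundedFormula.IsAtomic (l.get i) → BoundedFormula.IsAtomic (l.get j) → i = j

/-- A basic Horn formula is a disjunction `φ₀ ∨ ⋯ ∨ φₙ` in which at most one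
disjunct is atomic, the rest being negations of atomic formulas. -/
def IsBasicHorn (φ : L.Formula α) : Prop :=
  ∃ (ψ : L.Formula α) (l : List (L.Formula α)), φ = orList ψ l ∧ IsHornList (ψ :: l)

/-- A strict basic Horn formula (quasi-identity) is a basic Horn formula in which
at least one disjunct is atomic. -/
def IsQuasiIdentity (φ : L.Formula α) : Prop :=
  ∃ (ψ : L.Formula α) (l : List (L.Formula α)), φ = orList ψ l ∧ IsHornList (ψ :: l) ∧
    ∃ χ ∈ ψ :: l, BoundedFormula.IsAtomic χ

end Horn

/-- `SatAll M φ` means that every assignment of the free variables satisfies `φ` in `M`. -/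
def SatAll (M : Type u') [L.Structure M] {α : Type v'} (φ : L.Formula α) : Prop :=
  ∀ v : α → M, φ.Realize v

/-- A unit is a one-element structure in which every relation holds. -/
def IsUnit (L : FirstOrder.Language.{v, w}) (M : Type u') [L.Structure M] : Prop :=
  (∃ a : M, ∀ b : M, b = a) ∧
    ∀ (n : ℕ) (r : L.Relations n) (x : Fin n → M), RelMap r x

/-- A bundled nonempty `L`-structure. -/
structure SStruct (L : FirstOrder.Language.{v, w}) : Type (max (u + 1) v w) where
  /-- the underlying type -/
  carrier : Type u
  /-- the structure on the underlying type -/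
  struc : L.Structure carrier
  /-- the underlying type is nonempty -/
  nonempty : Nonempty carrier

attribute [instance] SStruct.struc SStruct.nonempty

instance : CoeSort (SStruct.{u} L) (Type u) :=
  ⟨SStruct.carrier⟩

/-- Bundle a nonempty structure. -/
def SStruct.of (M : Type u) [i : L.Structure M] [h : Nonempty M] : SStruct.{u} L :=
  ⟨M, i, h⟩

variable (L)

/-- A class of structures is closed under isomorphisms. -/
def ClosedUnderIso (K : Set (SStruct.{u} L)) : Prop :=
  ∀ M ∈ K, ∀ N : SStruct.{u} L, Nonempty ((M : Type u) ≃[L] (N : Type u)) → N ∈ K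

/-- A class of structures is closed under (nonempty) substructures. -/
def ClosedUnderSubstructures (K : Set (SStruct.{u} L)) : Prop :=
  ∀ M ∈ K, ∀ (S : L.Substructure (M : Type u)) (h : Nonempty S),
    (⟨S, inferInstance, h⟩ : SStruct.{u} L) ∈ K

/-- A class of structures is closed under reduced products (modulo proper filters). -/
def ClosedUnderReducedProducts (K : Set (SStruct.{u} L)) : Prop :=
  ∀ (ι : Type u) (F : Filter ι), F.NeBot → ∀ B : ι → SStruct.{u} L, (∀ i, B i ∈ K) →
    (⟨F.Product fun i => (B i : Type u), inferInstance, inferInstance⟩ : SStruct.{u} L) ∈ K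

/-- A class of structures is closed under homomorphic images. -/
def ClosedUnderHomImages (K : Set (SStruct.{u} L)) : Prop :=
  ∀ M ∈ K, ∀ (N : SStruct.{u} L) (f : (M : Type u) →[L] (N : Type u)),
    Function.Surjective f → N ∈ K

/-- A class of structures is closed under direct products. -/
def ClosedUnderProducts (K : Set (SStruct.{u} L)) : Prop :=
  ∀ (ι : Type u) (B : ι → SStruct.{u} L), (∀ i, B i ∈ K) →
    (⟨∀ i, (B i : Type u), inferInstance, inferInstance⟩ : SStruct.{u} L) ∈ K

/-- A class of structures is axiomatized by a set of formulas `Γ` if it consists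
exactly of those structures satisfying every formula of `Γ`. -/
def AxiomatizedBy (K : Set (SStruct.{u} L)) (Γ : Set (L.Formula ℕ)) : Prop :=
  ∀ M : SStruct.{u} L, M ∈ K ↔ ∀ φ ∈ Γ, SatAll (M : Type u) φ

/-- The positive diagram of `A`: all atomic `Σ(A)`-sentences true in `A`. -/
def DiagPlus (A : Type u') [L.Structure A] : Set ((L[[A]]).Sentence) :=
  {φ | BoundedFormula.IsAtomic φ ∧ A ⊨ φ}

/-- The negative diagram of `A`: all negated atomic `Σ(A)`-sentences true in `A`. -/
def DiagMinus (A : Type u') [L.Structure A] : Set ((L[[A]]).Sentence) :=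
  {φ | ∃ ψ : (L[[A]]).Sentence, BoundedFormula.IsAtomic ψ ∧ φ = ψ.not ∧ A ⊨ φ}

/-- The diagram of `A`. -/
def Diag (A : Type u') [L.Structure A] : Set ((L[[A]]).Sentence) :=
  DiagPlus L A ∪ DiagMinus L A

/-!
Every quasi-identity is an implication `θ₁ ∧ ⋯ ∧ θₙ → ψ` between atomic formulas. Since atomic
formulas hold in a reduced product iff they hold at almost all coordinates, and finitely many
premises can be handled simultaneously, such implications pass to reduced products.

Conversely, let `A` satisfy every quasi-identity valid in `K`. For a finite set of atomic formulas
(with parameters in `A`) true in `A` and one atomic formula false in `A`, the corresponding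
implication fails in `A`, hence in some member of `K`; if the latter formula is not false in `A`,
take the unit, which satisfies all atomic formulas, in place of such a member. The reduced product
of these structures, modulo the filter saying that the finite set is large and the other formula
arbitrary, satisfies precisely the atomic formulas true in `A`, so `A` embeds in it.
-/

section

variable {L} {α : Type*} {β : Type*} {M : Type*} {N : Type*} [L.Structure M] [L.Structure N]

section Atomic

theorem relabel_inl_surjective :
    Function.Surjective (Term.relabel Sum.inl : L.Term α → L.Term (α ⊕ Fin 0)) :=
  (Term.relabelEquiv (_root_.Equiv.sumEmpty α (Fin 0)).symm).surjective

theorem exists_equal_or_rel_of_isAtomic {φ : L.Formula α} (hφ : BoundedFormula.IsAtomic φ) :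
    (∃ t₁ t₂ : L.Term α, φ = t₁.equal t₂) ∨
      ∃ (n : ℕ) (R : L.Relations n) (ts : Fin n → L.Term α), φ = R.formula ts := by
  cases hφ with
  | equal t₁ t₂ =>
    obtain ⟨s₁, rfl⟩ := relabel_inl_surjective t₁
    obtain ⟨s₂, rfl⟩ := relabel_inl_surjective t₂
    exact .inl ⟨s₁, s₂, rfl⟩
  | rel R ts =>
    choose ss hss using fun i => relabel_inl_surjective (ts i)
    obtain rfl : (fun i => (ss i).relabel Sum.inl) = ts := funext hss
    exact .inr ⟨_, R, ss, rfl⟩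

theorem not_isAtomic_not (φ : L.Formula α) : ¬ BoundedFormula.IsAtomic φ.not :=
  nofun

theorem IsUnit.realize_of_isAtomic (hM : IsUnit L M) {φ : L.Formula α}
    (hφ : BoundedFormula.IsAtomic φ) (v : α → M) : φ.Realize v := by
  obtain ⟨⟨a, ha⟩, hR⟩ := hM
  obtain ⟨t₁, t₂, rfl⟩ | ⟨n, R, ts, rfl⟩ := exists_equal_or_rel_of_isAtomic hφ
  · exact Formula.realize_equal.2 ((ha _).trans (ha _).symm)
  · exact Formula.realize_rel.2 (hR _ _ _)

theorem nonempty_embedding_of_realize_iff_of_isAtomic (f : M → N)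
    (hf : ∀ φ : L.Formula M, BoundedFormula.IsAtomic φ →
      (φ.Realize f ↔ φ.Realize (id : M → M))) :
    Nonempty (M ↪[L] N) := by
  refine ⟨⟨⟨f, fun a b hab => ?_⟩, fun g x => ?_, fun R x => ?_⟩⟩
  · have := hf ((var a).equal (var b)) (.equal _ _)
    simp only [Formula.realize_equal, Term.realize_var] at this
    exact this.1 hab
  · have := hf ((func g fun i => var (x i)).equal (var (funMap g x))) (.equal _ _)
    simp only [Formula.realize_equal, Term.realize_func, Term.realize_var] at this
    exact (this.2 rfl).symm
  · have := hf (R.formula fun i => var (x i)) (.rel _ _)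
    simp only [Formula.realize_rel, Term.realize_var] at this
    exact this

end Atomic

section Variables

theorem realize_congr_of_freeVarFinset [DecidableEq α] {φ : L.Formula α} {v v' : α → M}
    (h : ∀ a ∈ φ.freeVarFinset, v a = v' a) : φ.Realize v ↔ φ.Realize v' :=
  (BoundedFormula.realize_restrictFreeVar (f := Subtype.val) (v := v) v fun _ => rfl).symm.trans
    (BoundedFormula.realize_restrictFreeVar v' fun a => h a a.2)

theorem exists_realize_relabel_nat_iff [Nonempty M] (φ : L.Formula α) (v : α → M) :
    ∃ (g : α → ℕ) (w : ℕ → M), (φ.relabel g).Realize w ↔ φ.Realize v := by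
  classical
  obtain ⟨g, hg⟩ := countable_iff_exists_injOn.1 φ.freeVarFinset.countable_toSet
  have hinj : Function.Injective fun a : φ.freeVarFinset => g a :=
    fun a b hab => Subtype.ext (hg a.2 b.2 hab)
  obtain ⟨w, hw⟩ := (Function.factorsThrough_iff _).1
    (hinj.factorsThrough fun a : φ.freeVarFinset => v a)
  exact ⟨g, w, Formula.realize_relabel.trans <|
    realize_congr_of_freeVarFinset fun a ha => (congrFun hw ⟨a, ha⟩).symm⟩

end Variables

section QuasiIdentities

theorem realize_orList {φ : L.Formula α} {l : List (L.Formula α)} {v : α → M} :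
    (orList φ l).Realize v ↔ ∃ χ ∈ φ :: l, χ.Realize v := by
  induction l generalizing φ with
  | nil => simp only [orList, List.mem_singleton, exists_eq_left]
  | cons ψ l ih => simp only [orList, Formula.realize_sup, ih, List.mem_cons, exists_eq_or_imp]

theorem relabel_orList (g : α → β) (φ : L.Formula α) (l : List (L.Formula α)) :
    (orList φ l).relabel g = orList (φ.relabel g) (l.map (Formula.relabel g)) := by
  induction l generalizing φ with
  | nil => rfl
  | cons ψ l ih => exact congrArg ((φ.relabel g) ⊔ ·) (ih ψ)

theorem isQF_orList {φ : L.Formula α} {l : List (L.Formula α)}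
    (h : ∀ χ ∈ φ :: l, BoundedFormula.IsQF χ) : BoundedFormula.IsQF (orList φ l) := by
  induction l generalizing φ with
  | nil => exact h φ List.mem_cons_self
  | cons ψ l ih =>
    exact (h φ List.mem_cons_self).sup (ih fun χ hχ => h χ (List.mem_cons_of_mem φ hχ))

theorem isHornList_iff_pairwise {l : List (L.Formula α)} :
    IsHornList l ↔
      (∀ χ ∈ l, BoundedFormula.IsAtomic χ ∨
        ∃ θ : L.Formula α, BoundedFormula.IsAtomic θ ∧ χ = θ.not) ∧
      l.Pairwise fun χ χ' => ¬ (BoundedFormula.IsAtomic χ ∧ BoundedFormula.IsAtomic χ') := by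
  rw [IsHornList, List.pairwise_iff_get]
  refine and_congr_right fun _ => ⟨fun h i j hij ⟨hi, hj⟩ => hij.ne (h i j hi hj),
    fun h i j hi hj => ?_⟩
  rcases lt_trichotomy i j with hij | hij | hij
  · exact (h i j hij ⟨hi, hj⟩).elim
  · exact hij
  · exact (h j i hij ⟨hj, hi⟩).elim

theorem IsHornList.perm {l l' : List (L.Formula α)} (h : IsHornList l) (hl : l.Perm l') :
    IsHornList l' := by
  rw [isHornList_iff_pairwise] at h ⊢
  exact ⟨fun χ hχ => h.1 χ (hl.mem_iff.2 hχ),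
    h.2.perm hl fun hχ hχ' => hχ hχ'.symm⟩

theorem isHornList_cons_iff {ψ : L.Formula α} (hψ : BoundedFormula.IsAtomic ψ)
    {l : List (L.Formula α)} :
    IsHornList (ψ :: l) ↔
      ∀ χ ∈ l, ∃ θ : L.Formula α, BoundedFormula.IsAtomic θ ∧ χ = θ.not := by
  rw [isHornList_iff_pairwise, List.pairwise_cons]
  constructor
  · rintro ⟨hl, hψl, -⟩ χ hχ
    exact (hl χ (List.mem_cons_of_mem ψ hχ)).resolve_left fun h => hψl χ hχ ⟨hψ, h⟩
  · intro hl
    have hna : ∀ χ ∈ l, ¬ BoundedFormula.IsAtomic χ := fun χ hχ => by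
      obtain ⟨θ, -, rfl⟩ := hl χ hχ
      exact not_isAtomic_not θ
    refine ⟨List.forall_mem_cons.2 ⟨.inl hψ, fun χ hχ => .inr (hl χ hχ)⟩,
      fun χ hχ h => hna χ hχ h.2, List.pairwise_of_forall_mem_list fun χ hχ _ _ h => hna χ hχ h.1⟩

/-- `IsImplication φ P ψ` says that `φ` is the implication from the conjunction of the list `P` of
premises to the conclusion `ψ`, written as the disjunction of `ψ` and the negated premises, in an
arbitrary order. -/
def IsImplication (φ : L.Formula α) (P : List (L.Formula α)) (ψ : L.Formula α) : Prop :=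
  ∃ (χ : L.Formula α) (l : List (L.Formula α)),
    φ = orList χ l ∧ (χ :: l).Perm (ψ :: P.map Formula.not)

theorem isImplication_orList (P : List (L.Formula α)) (ψ : L.Formula α) :
    IsImplication (orList ψ (P.map Formula.not)) P ψ :=
  ⟨ψ, P.map Formula.not, rfl, .refl _⟩

theorem IsImplication.realize_iff {φ : L.Formula α} {P : List (L.Formula α)} {ψ : L.Formula α}
    (h : IsImplication φ P ψ) {v : α → M} :
    φ.Realize v ↔ ((∀ θ ∈ P, θ.Realize v) → ψ.Realize v) := by
  obtain ⟨χ, l, rfl, hl⟩ := h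
  simp only [realize_orList, hl.mem_iff, List.mem_cons, List.mem_map, exists_eq_or_imp,
    exists_exists_and_eq_and, Formula.realize_not]
  rw [imp_iff_or_not, not_forall₂]
  simp only [exists_prop]

theorem IsImplication.relabel {φ : L.Formula α} {P : List (L.Formula α)} {ψ : L.Formula α}
    (h : IsImplication φ P ψ) (g : α → β) :
    IsImplication (φ.relabel g) (P.map (Formula.relabel g)) (ψ.relabel g) := by
  obtain ⟨χ, l, rfl, hl⟩ := h
  refine ⟨χ.relabel g, l.map (Formula.relabel g), relabel_orList g χ l, ?_⟩
  have hrelabel_not : Formula.relabel g ∘ (Formula.not : L.Formula α → _) =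
      Formula.not ∘ Formula.relabel g :=
    funext fun θ => BoundedFormula.relabel_not (Sum.inl ∘ g) θ
  simpa only [List.map_cons, List.map_map, hrelabel_not] using hl.map (Formula.relabel g)

theorem isQuasiIdentity_iff {φ : L.Formula α} :
    IsQuasiIdentity φ ↔ ∃ (P : List (L.Formula α)) (ψ : L.Formula α),
      (∀ θ ∈ P, BoundedFormula.IsAtomic θ) ∧ BoundedFormula.IsAtomic ψ ∧
        IsImplication φ P ψ := by
  constructor
  · rintro ⟨χ, l, rfl, hHorn, ψ, hψl, hψ⟩
    obtain ⟨l₁, l₂, hl⟩ := List.append_of_mem hψl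
    have hperm : (χ :: l).Perm (ψ :: (l₁ ++ l₂)) := hl ▸ List.perm_middle
    have hneg := (isHornList_cons_iff hψ).1 (hHorn.perm hperm)
    obtain ⟨P, hP, hPneg⟩ : ∃ P : List (L.Formula α),
        (∀ θ ∈ P, BoundedFormula.IsAtomic θ) ∧ P.map Formula.not = l₁ ++ l₂ := by
      choose! θ hθ hθl using hneg
      refine ⟨(l₁ ++ l₂).map θ, List.forall_mem_map.2 hθ, ?_⟩
      rw [List.map_map]
      exact (List.map_congr_left fun χ hχ => (hθl χ hχ).symm).trans (List.map_id _)
    exact ⟨P, ψ, hP, hψ, χ, l, rfl, hPneg ▸ hperm⟩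
  · rintro ⟨P, ψ, hP, hψ, χ, l, rfl, hl⟩
    refine ⟨χ, l, rfl, IsHornList.perm ((isHornList_cons_iff hψ).2 ?_) hl.symm, ψ,
      hl.mem_iff.2 List.mem_cons_self, hψ⟩
    exact List.forall_mem_map.2 fun θ hθ => ⟨θ, hP θ hθ, rfl⟩

theorem IsQuasiIdentity.isUniversal {φ : L.Formula α} (hφ : IsQuasiIdentity φ) :
    BoundedFormula.IsUniversal φ := by
  obtain ⟨ψ, l, rfl, ⟨hl, -⟩, -⟩ := hφ
  refine (isQF_orList fun χ hχ => ?_).isUniversal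
  obtain hχ | ⟨θ, hθ, rfl⟩ := hl χ hχ
  · exact hχ.isQF
  · exact hθ.isQF.not

theorem IsQuasiIdentity.relabel {φ : L.Formula α} (hφ : IsQuasiIdentity φ) (g : α → β) :
    IsQuasiIdentity (φ.relabel g) := by
  obtain ⟨P, ψ, hP, hψ, himp⟩ := isQuasiIdentity_iff.1 hφ
  exact isQuasiIdentity_iff.2 ⟨_, _,
    List.forall_mem_map.2 fun θ hθ => (hP θ hθ).relabel _, hψ.relabel _, himp.relabel g⟩

end QuasiIdentities

section Preservation

theorem SatAll.of_equiv {φ : L.Formula α} (h : SatAll M φ) (e : M ≃[L] N) : SatAll N φ :=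
  fun v => (StrongHomClass.realize_formula e.symm φ).1 (h (e.symm ∘ v))

theorem SatAll.of_embedding {φ : L.Formula α} (h : SatAll N φ) (hφ : BoundedFormula.IsUniversal φ)
    (f : M ↪[L] N) : SatAll M φ := fun v => by
  have := h (f ∘ v)
  rw [Formula.Realize, ← Unique.eq_default (f ∘ default)] at this
  exact hφ.realize_embedding f this

theorem IsUnit.satAll (hM : IsUnit L M) {φ : L.Formula α} (hφ : IsQuasiIdentity φ) :
    SatAll M φ := fun v => by
  obtain ⟨P, ψ, -, hψ, himp⟩ := isQuasiIdentity_iff.1 hφ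
  exact himp.realize_iff.2 fun _ => hM.realize_of_isAtomic hψ v

variable {ι : Type*} {F : Filter ι} {B : ι → Type*} [∀ i, L.Structure (B i)]

theorem realize_term_product (x : α → ∀ i, B i) (t : L.Term α) :
    (t.realize fun a => (x a : F.Product B)) =
      ((fun i => t.realize fun a => x a i : ∀ i, B i) : F.Product B) := by
  have hcoord : (@Term.realize L _ (reducedProductPrestructure F B).toStructure _ x t) =
      fun i => t.realize fun a => x a i := by
    funext i
    induction t with
    | var => rfl
    | func f ts ih => exact congrArg (funMap f) (funext ih)
  rw [← hcoord]
  exact Term.realize_quotient_mk' (F.productSetoid B) t x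

theorem realize_product_iff_of_isAtomic (x : α → ∀ i, B i) {φ : L.Formula α}
    (hφ : BoundedFormula.IsAtomic φ) :
    (φ.Realize fun a => (x a : F.Product B)) ↔ ∀ᶠ i in F, φ.Realize fun a => x a i := by
  obtain ⟨t₁, t₂, rfl⟩ | ⟨n, R, ts, rfl⟩ := exists_equal_or_rel_of_isAtomic hφ
  · simp only [Formula.realize_equal, realize_term_product]
    exact Quotient.eq
  · simp only [Formula.realize_rel, realize_term_product]
    exact relMap_quotient_mk' (F.productSetoid B) R _

theorem IsQuasiIdentity.satAll_product {φ : L.Formula α} (hφ : IsQuasiIdentity φ)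
    (hB : ∀ᶠ i in F, SatAll (B i) φ) : SatAll (F.Product B) φ := fun v => by
  obtain ⟨P, ψ, hP, hψ, himp⟩ := isQuasiIdentity_iff.1 hφ
  obtain ⟨x, rfl⟩ : ∃ x : α → ∀ i, B i, (fun a => (x a : F.Product B)) = v :=
    ⟨fun a => (v a).out, funext fun a => (v a).out_eq⟩
  refine himp.realize_iff.2 fun hv => ?_
  have hpremises : ∀ᶠ i in F, ∀ θ ∈ P, θ.Realize fun a => x a i :=
    (eventually_all_finite P.finite_toSet).2 fun θ hθ =>
      (realize_product_iff_of_isAtomic x (hP θ hθ)).1 (hv θ hθ)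
  refine (realize_product_iff_of_isAtomic x hψ).2 ?_
  filter_upwards [hB, hpremises] with i hBi hxi
  exact himp.realize_iff.1 (hBi _) hxi

end Preservation

section AxiomatizedClasses

theorem exists_isUnit (L : FirstOrder.Language.{v, w}) :
    ∃ U : SStruct.{u} L, IsUnit L (U : Type u) :=
  ⟨⟨PUnit, { funMap := fun _ _ => .unit, RelMap := fun _ _ => True }, inferInstance⟩,
    ⟨.unit, fun _ => rfl⟩, fun _ _ _ => trivial⟩

variable {K : Set (SStruct.{u} L)} {Γ : Set (L.Formula ℕ)}

theorem AxiomatizedBy.exists_isUnit_mem (hK : AxiomatizedBy L K Γ)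
    (hΓ : ∀ φ ∈ Γ, IsQuasiIdentity φ) : ∃ M ∈ K, IsUnit L (M : Type u) := by
  obtain ⟨U, hU⟩ := exists_isUnit.{u} L
  exact ⟨U, (hK U).2 fun φ hφ => hU.satAll (hΓ φ hφ), hU⟩

theorem AxiomatizedBy.closedUnderIso (hK : AxiomatizedBy L K Γ) : ClosedUnderIso L K :=
  fun M hM N ⟨e⟩ => (hK N).2 fun φ hφ => ((hK M).1 hM φ hφ).of_equiv e

theorem AxiomatizedBy.closedUnderSubstructures (hK : AxiomatizedBy L K Γ)
    (hΓ : ∀ φ ∈ Γ, BoundedFormula.IsUniversal φ) : ClosedUnderSubstructures L K :=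
  fun M hM S _ => (hK _).2 fun φ hφ => ((hK M).1 hM φ hφ).of_embedding (hΓ φ hφ) S.subtype

theorem AxiomatizedBy.closedUnderReducedProducts (hK : AxiomatizedBy L K Γ)
    (hΓ : ∀ φ ∈ Γ, IsQuasiIdentity φ) : ClosedUnderReducedProducts L K :=
  fun _ _ _ B hB => (hK _).2 fun φ hφ =>
    (hΓ φ hφ).satAll_product (.of_forall fun i => (hK (B i)).1 (hB i) φ hφ)

end AxiomatizedClasses

section QuasiEquationalTheory

/-- The quasi-identities, in countably many variables, that are valid in every member of `K`. -/
def quasiEquationalTheory (K : Set (SStruct.{u} L)) : Set (L.Formula ℕ) :=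
  {φ | IsQuasiIdentity φ ∧ ∀ B ∈ K, SatAll (B : Type u) φ}

variable {K : Set (SStruct.{u} L)} {A : SStruct.{u} L}

theorem satAll_of_quasiEquationalTheory
    (hA : ∀ φ ∈ quasiEquationalTheory K, SatAll (A : Type u) φ) {φ : L.Formula α}
    (hφ : IsQuasiIdentity φ) (hK : ∀ B ∈ K, SatAll (B : Type u) φ) : SatAll (A : Type u) φ := by
  intro v
  obtain ⟨g, w, hgw⟩ := exists_realize_relabel_nat_iff φ v
  exact hgw.1 <| hA (φ.relabel g)
    ⟨hφ.relabel g, fun B hB u => Formula.realize_relabel.2 (hK B hB (u ∘ g))⟩ w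

theorem exists_mem_realize_and_not_realize
    (hA : ∀ φ ∈ quasiEquationalTheory K, SatAll (A : Type u) φ) {P : List (L.Formula α)}
    (hP : ∀ θ ∈ P, BoundedFormula.IsAtomic θ) {ψ : L.Formula α} (hψ : BoundedFormula.IsAtomic ψ)
    {v : α → A} (hPv : ∀ θ ∈ P, θ.Realize v) (hψv : ¬ ψ.Realize v) :
    ∃ B ∈ K, ∃ w : α → B, (∀ θ ∈ P, θ.Realize w) ∧ ¬ ψ.Realize w := by
  by_contra! hK
  have himp := isImplication_orList P ψ
  have hquasi := isQuasiIdentity_iff.2 ⟨P, ψ, hP, hψ, himp⟩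
  have hsat := satAll_of_quasiEquationalTheory hA hquasi fun B hB w =>
    himp.realize_iff.2 (hK B hB w)
  exact hψv (himp.realize_iff.1 (hsat v) hPv)

theorem exists_mem_realize_imp {U : SStruct.{u} L} (hUK : U ∈ K)
    (hU : IsUnit L (U : Type u)) (hA : ∀ φ ∈ quasiEquationalTheory K, SatAll (A : Type u) φ)
    (v : α → A) (s : Finset (L.Formula α)) (ψ : L.Formula α) :
    ∃ B ∈ K, ∃ w : α → B,
      (∀ θ ∈ s, BoundedFormula.IsAtomic θ → θ.Realize v → θ.Realize w) ∧
        (BoundedFormula.IsAtomic ψ → ψ.Realize w → ψ.Realize v) := by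
  classical
  by_cases hψ : BoundedFormula.IsAtomic ψ ∧ ¬ ψ.Realize v
  · let P := (s.filter fun θ => BoundedFormula.IsAtomic θ ∧ Formula.Realize θ v).toList
    have hmem : ∀ θ, θ ∈ P ↔ θ ∈ s ∧ BoundedFormula.IsAtomic θ ∧ Formula.Realize θ v := fun θ => by
      rw [Finset.mem_toList, Finset.mem_filter]
    obtain ⟨B, hB, w, hPw, hψw⟩ := exists_mem_realize_and_not_realize hA
      (fun θ hθ => ((hmem θ).1 hθ).2.1) hψ.1 (fun θ hθ => ((hmem θ).1 hθ).2.2) hψ.2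
    exact ⟨B, hB, w, fun θ hθs hθ hθv => hPw θ ((hmem θ).2 ⟨hθs, hθ, hθv⟩),
      fun _ h => (hψw h).elim⟩
  · exact ⟨U, hUK, fun _ => Classical.arbitrary U, fun θ _ hθ _ => hU.realize_of_isAtomic hθ _,
      fun h _ => by_contra fun hv => hψ ⟨h, hv⟩⟩

end QuasiEquationalTheory

section ReducedProductEmbedding

theorem mem_of_embedding {K : Set (SStruct.{u} L)} (hI : ClosedUnderIso L K)
    (hS : ClosedUnderSubstructures L K) {A N : SStruct.{u} L} (hN : N ∈ K)
    (f : (A : Type u) ↪[L] (N : Type u)) : A ∈ K :=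
  have hne : Nonempty f.toHom.range := A.nonempty.map f.equivRange
  hI _ (hS N hN f.toHom.range hne) A ⟨f.equivRange.symm⟩

theorem nonempty_embedding_product {B : Finset (L.Formula M) × L.Formula M → Type*}
    [∀ i, L.Structure (B i)] (v : ∀ i, M → B i)
    (hpos : ∀ i, ∀ θ ∈ i.1, BoundedFormula.IsAtomic θ →
      Formula.Realize θ (id : M → M) → Formula.Realize θ (v i))
    (hneg : ∀ i, BoundedFormula.IsAtomic i.2 →
      Formula.Realize i.2 (v i) → Formula.Realize i.2 (id : M → M)) :
    Nonempty (M ↪[L] ((atTop ×ˢ ⊤ : Filter (Finset (L.Formula M) × L.Formula M)).Product B)) := by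
  refine nonempty_embedding_of_realize_iff_of_isAtomic
    (fun a => ((fun i => v i a : ∀ i, B i) : Filter.Product _ B)) fun φ hφ =>
      (realize_product_iff_of_isAtomic (fun a i => v i a) hφ).trans ⟨fun h => ?_, fun h => ?_⟩
  · obtain ⟨s, hs⟩ := h.curry.exists
    exact hneg (s, φ) hφ (eventually_top.1 hs φ)
  · have hmem : ∀ᶠ s : Finset (L.Formula M) in atTop, φ ∈ s :=
      (eventually_ge_atTop {φ}).mono fun s => Finset.singleton_subset_iff.1
    filter_upwards [hmem.prod_inl ⊤] with i hi
    exact hpos i φ hi hφ h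

/- The reduced product is indexed by formulas with parameters in the structure, so the signature has
to fit into the universe of the structures. -/
theorem axiomatizedBy_quasiEquationalTheory {K : Set (SStruct.{max u v w} L)}
    (hU : ∃ U ∈ K, IsUnit L (U : Type (max u v w)))
    (hI : ClosedUnderIso L K) (hS : ClosedUnderSubstructures L K)
    (hR : ClosedUnderReducedProducts L K) : AxiomatizedBy L K (quasiEquationalTheory K) := by
  refine fun A => ⟨fun hA φ hφ => hφ.2 A hA, fun hA => ?_⟩
  obtain ⟨U, hUK, hU⟩ := hU
  choose B hBK v hpos hneg using fun i : Finset (L.Formula A) × L.Formula A =>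
    exists_mem_realize_imp hUK hU hA id i.1 i.2
  obtain ⟨f⟩ := nonempty_embedding_product v hpos hneg
  exact mem_of_embedding hI hS (hR _ (atTop ×ˢ ⊤) inferInstance B hBK) f

end ReducedProductEmbedding

end

theorem quasivariety_iff_general {L : FirstOrder.Language.{v, w}}
    (K : Set (SStruct.{max u v w} L)) :
    (∃ Γ : Set (L.Formula ℕ), (∀ φ ∈ Γ, IsQuasiIdentity φ) ∧ AxiomatizedBy L K Γ) ↔
      ((∃ M ∈ K, IsUnit L (M : Type (max u v w))) ∧ ClosedUnderIso L K ∧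
        ClosedUnderSubstructures L K ∧ ClosedUnderReducedProducts L K) := by
  constructor
  · rintro ⟨Γ, hΓ, hK⟩
    exact ⟨hK.exists_isUnit_mem hΓ, hK.closedUnderIso,
      hK.closedUnderSubstructures fun φ hφ => (hΓ φ hφ).isUniversal,
      hK.closedUnderReducedProducts hΓ⟩
  · rintro ⟨hU, hI, hS, hR⟩
    exact ⟨quasiEquationalTheory K, fun φ hφ => hφ.1,
      axiomatizedBy_quasiEquationalTheory.{u, v, w} hU hI hS hR⟩

/-- Mal'cev's theorem on quasivarieties: a class of structures is a quasivariety
(axiomatized by a set of quasi-identities) iff it contains a unit and is closed under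
isomorphisms, substructures, and reduced products. -/
theorem quasivariety_iff {L : FirstOrder.Language.{u, u}}
    (K : Set (SStruct.{u} L)) :
    (∃ Γ : Set (L.Formula ℕ), (∀ φ ∈ Γ, IsQuasiIdentity φ) ∧ AxiomatizedBy L K Γ) ↔
      ((∃ M ∈ K, IsUnit L (M : Type u)) ∧ ClosedUnderIso L K ∧
        ClosedUnderSubstructures L K ∧ ClosedUnderReducedProducts L K) :=
  quasivariety_iff_general.{u, u, u} K

end ZFHorn
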